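/- For every i ∈ {1,…,n} and every policy π visited by Bland(𝔅_n, π_0, 𝒩_{𝔅_n}): if the algorithm applies the improving switch skip(i) to π, then z_π(skip(i)) > z_π(board(i)); and if it applies the improving switch enter(i) to π, then z_π(enter(i)) > z_π(skip(i)) and z_π(enter(i)) > z_π(board(i)). -/

import Mathlib

/-! ## The Markov decision process `𝔅_n` -/

/-- Vertices of the MDP `𝔅_n`: a transportation vertex `t`, a sink `s`, a dummy vertex `d`,
and vertices `a i`, `b i` for `i ∈ {1,…,n}`. -/
inductive BV : Type where
  | t : BV
  | s : BV
  | d : BV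
  | a : ℕ → BV
  | b : ℕ → BV
deriving DecidableEq

/-- The vertex `a i` for `i ∈ {1,…,n+1}`, with the convention `a (n+1) = s`. -/
def aN (n i : ℕ) : BV := if i = n + 1 then BV.s else BV.a i

/-- The vertex `b i` for `i ∈ {1,…,n+1}`, with the convention `b (n+1) = d`. -/
def bN (n i : ℕ) : BV := if i = n + 1 then BV.d else BV.b i

/-- The vertex set of `𝔅_n`. -/
def IsBVertex (n : ℕ) : BV → Prop
  | BV.t => True
  | BV.s => True
  | BV.d => True
  | BV.a i => 1 ≤ i ∧ i ≤ n
  | BV.b i => 1 ≤ i ∧ i ≤ n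

/-- The edge relation of `𝔅_n`: travel, enter, skip, board, stay, leave edges,
the edge `(d,s)` and the self-loop `(s,s)`. -/
def BEdge (n : ℕ) (u v : BV) : Prop :=
  (∃ i, 1 ≤ i ∧ i ≤ n ∧ u = BV.t ∧ v = BV.a i) ∨
  (∃ i, 1 ≤ i ∧ i ≤ n ∧ u = BV.a i ∧ v = BV.b i) ∨
  (∃ i, 1 ≤ i ∧ i ≤ n ∧ u = BV.a i ∧ v = aN n (i + 1)) ∨
  (∃ i, 1 ≤ i ∧ i ≤ n ∧ u = BV.a i ∧ v = BV.t) ∨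
  (∃ i, 1 ≤ i ∧ i ≤ n ∧ u = BV.b i ∧ v = bN n (i + 1)) ∨
  (∃ i, 1 ≤ i ∧ i ≤ n ∧ u = BV.b i ∧ v = aN n (i + 1)) ∨
  (u = BV.d ∧ v = BV.s) ∨ (u = BV.s ∧ v = BV.s)

/-- The reward function of `𝔅_n`: `r(enter i) = 2^i`, `r(stay i) = 3/4`,
`r(board i) = -2^i + 5/4`, and reward `0` on all other edges. -/
def rB (n : ℕ) (u v : BV) : ℚ :=
  match u, v with
  | BV.a i, BV.b j => if i = j then 2 ^ i else 0
  | BV.a i, BV.t => -(2 ^ i) + 5 / 4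
  | BV.b i, BV.b j => if j = i + 1 then 3 / 4 else 0
  | BV.b i, BV.d => if i = n then 3 / 4 else 0
  | _, _ => 0

/-- A policy for `𝔅_n` chooses an outgoing edge at every vertex. -/
def IsBPolicy (n : ℕ) (π : BV → BV) : Prop := ∀ u, IsBVertex n u → BEdge n u (π u)

/-- A policy is weak unichain if it reaches the sink `s` from every vertex. -/
def BWeakUnichain (n : ℕ) (π : BV → BV) : Prop :=
  ∀ u, IsBVertex n u → ∃ k, π^[k] u = BV.s

open Classical in
/-- The value of a vertex `v` w.r.t. a (weak unichain) policy `π`: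
the sum of the rewards along the path that `π` takes from `v` to the sink `s`. -/
noncomputable def BVal (n : ℕ) (π : BV → BV) (v : BV) : ℚ :=
  if h : ∃ k, π^[k] v = BV.s then
    ∑ i ∈ Finset.range (Nat.find h), rB n (π^[i] v) (π^[i + 1] v)
  else 0

/-- The reduced costs of the edge `(u,v)` w.r.t. the policy `π`. -/
noncomputable def zB (n : ℕ) (π : BV → BV) (u v : BV) : ℚ :=
  rB n u v + BVal n π v - BVal n π u

/-- The edge `(u,v)` is an improving switch for `π` if its reduced costs are positive. -/
def BImproving (n : ℕ) (π : BV → BV) (u v : BV) : Prop :=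
  BEdge n u v ∧ 0 < zB n π u v

/-- The Bland numbering `𝒩_{𝔅_n}` of the edges of `𝔅_n`. -/
def NB (n : ℕ) (u v : BV) : ℕ :=
  match u, v with
  | BV.t, BV.a i => i
  | BV.a i, BV.b _ => n + 1 + 5 * (i - 1)
  | BV.a i, BV.a _ => n + 2 + 5 * (i - 1)
  | BV.a i, BV.s => n + 2 + 5 * (i - 1)
  | BV.a i, BV.t => n + 3 + 5 * (i - 1)
  | BV.b i, BV.b _ => n + 4 + 5 * (i - 1)
  | BV.b i, BV.d => n + 4 + 5 * (i - 1)
  | BV.b i, BV.a _ => n + 5 + 5 * (i - 1)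
  | BV.b i, BV.s => n + 5 + 5 * (i - 1)
  | BV.d, BV.s => 6 * n + 1
  | BV.s, BV.s => 6 * n + 2
  | _, _ => 0

/-- One step of Bland's policy iteration with edge numbering `N`:
apply the improving switch with the smallest number. -/
def IsBlandStep (n : ℕ) (N : BV → BV → ℕ) (π π' : BV → BV) : Prop :=
  ∃ u v, BImproving n π u v ∧ (∀ u' v', BImproving n π u' v' → N u v ≤ N u' v') ∧
    π' = Function.update π u v

/-- `BlandReaches n N π ψ` says that Bland's policy iteration started at `π` visits `ψ`. -/
def BlandReaches (n : ℕ) (N : BV → BV → ℕ) : (BV → BV) → (BV → BV) → Prop :=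
  Relation.ReflTransGen (IsBlandStep n N)

/-- The canonical policy `π_0` for `0`: `travel 1`, `skip i` and `leave i` are active. -/
def pi0 (n : ℕ) : BV → BV := fun u =>
  match u with
  | BV.t => BV.a 1
  | BV.a i => aN n (i + 1)
  | BV.b i => aN n (i + 1)
  | BV.d => BV.s
  | BV.s => BV.s

/-- The optimal policy `π_*`: `travel 1`, `enter i` for all `i`, `leave j` for `j < n`,
and `stay n` are active. -/
def piStar (n : ℕ) : BV → BV := fun u =>
  match u with
  | BV.t => BV.a 1
  | BV.a i => BV.b i
  | BV.b i => if i = n then BV.d else BV.a (i + 1)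
  | BV.d => BV.s
  | BV.s => BV.s

/-! ## Bits and canonical policies -/

/-- The least significant set bit `ℓ_1(x)` (1-based). -/
noncomputable def lsb (x : ℕ) : ℕ := sInf {i | 1 ≤ i ∧ Nat.testBit x (i - 1)}

/-- The most significant set bit `m(x)` (1-based). -/
noncomputable def msb1 (x : ℕ) : ℕ := sSup {i | 1 ≤ i ∧ Nat.testBit x (i - 1)}

/-- The least unset bit `ℓ_0(x)` (1-based). -/
noncomputable def lzero (x : ℕ) : ℕ := sInf {i | 1 ≤ i ∧ ¬ Nat.testBit x (i - 1)}

/-- `L_i(x) = max { j ≤ i-2 | x_j = 1 or j = 1 }` (1-based bits). -/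
noncomputable def Lfun (i x : ℕ) : ℕ :=
  sSup {j | 1 ≤ j ∧ j ≤ i - 2 ∧ (Nat.testBit x (j - 1) ∨ j = 1)}

/-- `IsCanonical n x π` says that `π` is the canonical policy `π_x` for `x`. -/
noncomputable def IsCanonical (n x : ℕ) (π : BV → BV) : Prop :=
  IsBPolicy n π ∧
  if x = 0 then
    π BV.t = BV.a 1 ∧
      ∀ i, 1 ≤ i → i ≤ n → π (BV.a i) = aN n (i + 1) ∧ π (BV.b i) = aN n (i + 1)
  else
    π BV.t = BV.a (lsb x) ∧
    π (BV.b (msb1 x)) = aN n (msb1 x + 1) ∧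
    (∀ i, msb1 x < i → i ≤ n → π (BV.a i) = aN n (i + 1) ∧ π (BV.b i) = aN n (i + 1)) ∧
    ∀ i, 1 ≤ i → i ≤ n → Nat.testBit x (i - 1) →
      π (BV.a i) = BV.b i ∧
      (i = 2 → π (BV.b 1) = BV.a 2 ∧ (¬ Nat.testBit x 0 → π (BV.a 1) = BV.a 2)) ∧
      (3 ≤ i → Nat.testBit x (i - 2) → π (BV.b (i - 1)) = BV.a i) ∧
      (3 ≤ i → ¬ Nat.testBit x (i - 2) →
        π (BV.b (i - 1)) = BV.b i ∧ π (BV.a (i - 1)) = BV.a i ∧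
        π (BV.b (i - 2)) = BV.a (i - 1) ∧
        (Lfun i x < i - 2 →
          ∀ j, Lfun i x + 1 ≤ j → j ≤ i - 2 →
            π (BV.a j) = BV.t ∧ π (BV.b (j - 1)) = BV.b j) ∧
        (Lfun i x = 1 → ¬ Nat.testBit x 0 → π (BV.a 1) = BV.t))

/-- Activating a list of edges in a policy, from left to right. -/
def activateList (π : BV → BV) (L : List (BV × BV)) : BV → BV :=
  L.foldl (fun σ e => Function.update σ e.1 e.2) π

/-- The canonical phases w.r.t. an odd number `x` (with `ℓ := ℓ_0(x)`), as a list of edges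
to be activated in order. -/
noncomputable def phaseList (n x : ℕ) : List (BV × BV) :=
  let ℓ := lzero x
  (if Nat.testBit x ℓ then [(BV.b ℓ, aN n (ℓ + 1))] else []) ++
  (if Nat.testBit x ℓ ∨ msb1 x < ℓ then [(BV.b (ℓ - 1), BV.b ℓ)] else []) ++
  [(BV.a ℓ, BV.b ℓ), (BV.t, BV.a ℓ)] ++
  ((List.range (ℓ - 2)).map fun j => (BV.a (j + 1), BV.t)) ++
  [(BV.a (ℓ - 1), BV.a ℓ)] ++
  (((List.range (ℓ - 3)).reverse).map fun j => (BV.b (j + 1), BV.b (j + 2))) ++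
  (if ℓ = 2 then [(BV.b 1, BV.a 2)] else [])

/-! ## The Markov decision process `𝔇_n` -/

/-- Vertices of `𝔇_n`: the original vertices (`base`), and for every edge `(v,w)` of `𝔅_n`
other than the self-loop, the gadget vertices `x v w`, `y v w`, `z v w`. -/
inductive DV : Type where
  | base : BV → DV
  | x : BV → BV → DV
  | y : BV → BV → DV
  | z : BV → BV → DV
deriving DecidableEq

/-- The edges of `𝔅_n` that get replaced by gadgets (all edges except the self-loop `(s,s)`). -/
def DEdgePair (n : ℕ) (v w : BV) : Prop := BEdge n v w ∧ v ≠ BV.s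

/-- The vertex set of `𝔇_n`. -/
def IsDVertex (n : ℕ) : DV → Prop
  | DV.base v => IsBVertex n v
  | DV.x v w => DEdgePair n v w
  | DV.y v w => DEdgePair n v w
  | DV.z v w => DEdgePair n v w

/-- The agent vertices of `𝔇_n` (all vertices except the randomization vertices `y v w`). -/
def IsDAgent (n : ℕ) : DV → Prop
  | DV.base v => IsBVertex n v
  | DV.x v w => DEdgePair n v w
  | DV.y _ _ => False
  | DV.z v w => DEdgePair n v w

/-- The agent edges of `𝔇_n`. -/
def DEdge (n : ℕ) (u u' : DV) : Prop :=
  (∃ v w, DEdgePair n v w ∧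
    ((u = DV.base v ∧ u' = DV.x v w) ∨ (u = DV.x v w ∧ u' = DV.base v) ∨
     (u = DV.x v w ∧ u' = DV.y v w) ∨ (u = DV.z v w ∧ u' = DV.base w))) ∨
  (u = DV.base BV.s ∧ u' = DV.base BV.s)

/-- The reward function of `𝔇_n`: the edge `(z v w, w)` carries the reward of the original
edge `(v,w)`; all other agent edges have reward `0`. -/
def rD (n : ℕ) (u u' : DV) : ℚ :=
  match u, u' with
  | DV.z v w, DV.base w' => if w' = w then rB n v w else 0
  | _, _ => 0

/-- A policy for `𝔇_n` chooses an outgoing agent edge at every agent vertex. -/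
def IsDPolicy (n : ℕ) (π : DV → DV) : Prop := ∀ u, IsDAgent n u → DEdge n u (π u)

/-- `IsDVal n p π V` says that `V` satisfies the Bellman equations characterizing the value
function of the policy `π` for `𝔇_n` with probabilities `p`, with `V s = 0`. -/
def IsDVal (n : ℕ) (p : BV → ℚ) (π : DV → DV) (V : DV → ℚ) : Prop :=
  V (DV.base BV.s) = 0 ∧
  (∀ u, IsDAgent n u → V u = rD n u (π u) + V (π u)) ∧
  (∀ v w, DEdgePair n v w →
    V (DV.y v w) = p v * V (DV.z v w) + (1 - p v) * V (DV.base v))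

open Classical in
/-- The value function of a (weak unichain) policy `π` for `𝔇_n`: the unique solution of the
Bellman equations (normalized to `0` outside the vertex set). -/
noncomputable def DVal (n : ℕ) (p : BV → ℚ) (π : DV → DV) : DV → ℚ :=
  if h : ∃! V : DV → ℚ, IsDVal n p π V ∧ ∀ u, ¬ IsDVertex n u → V u = 0 then
    h.exists.choose
  else fun _ => 0

/-- The reduced costs of an agent edge `(u,u')` of `𝔇_n` w.r.t. the policy `π`. -/
noncomputable def zD (n : ℕ) (p : BV → ℚ) (π : DV → DV) (u u' : DV) : ℚ :=
  rD n u u' + DVal n p π u' - DVal n p π u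

/-- An agent edge of `𝔇_n` is an improving switch if its reduced costs are positive. -/
def DImproving (n : ℕ) (p : BV → ℚ) (π : DV → DV) (u u' : DV) : Prop :=
  DEdge n u u' ∧ 0 < zD n p π u u'

/-- One (agent or positive-probability randomization) step of the process `𝔇_n` under `π`. -/
def DStep (n : ℕ) (p : BV → ℚ) (π : DV → DV) (u u' : DV) : Prop :=
  (IsDAgent n u ∧ u' = π u) ∨
  (∃ v w, DEdgePair n v w ∧ u = DV.y v w ∧
    ((u' = DV.z v w ∧ 0 < p v) ∨ (u' = DV.base v ∧ 0 < 1 - p v)))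

/-- A policy for `𝔇_n` is weak unichain if it reaches `s` with probability one from every
vertex, i.e. `s` is reachable via active/positive-probability steps from every vertex. -/
def DWeakUnichain (n : ℕ) (p : BV → ℚ) (π : DV → DV) : Prop :=
  ∀ u, IsDVertex n u → Relation.ReflTransGen (DStep n p π) u (DV.base BV.s)

/-- The twin policy of a policy `π` for `𝔅_n`: every vertex `v ≠ s` is `π v`-oriented. -/
def twin (π : BV → BV) : DV → DV := fun u =>
  match u with
  | DV.base v => if v = BV.s then DV.base BV.s else DV.x v (π v)
  | DV.x v w => if w = π v then DV.y v w else DV.base v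
  | DV.y v w => DV.y v w
  | DV.z _ w => DV.base w

/-- The vertex numbering `𝒩_V` of `𝔅_n`: the order `(t, a 1, b 1, a 2, b 2, …, a n, b n, d, s)`. -/
def NV (n : ℕ) : BV → ℕ
  | BV.t => 1
  | BV.a i => 2 * i
  | BV.b i => 2 * i + 1
  | BV.d => 2 * n + 2
  | BV.s => 2 * n + 3

/-- The specific probabilities `p_v = 2^{-𝒩_V(v)·(n+5)}`. -/
noncomputable def pSpec (n : ℕ) (v : BV) : ℚ := (2 : ℚ) ^ (-((NV n v * (n + 5) : ℕ) : ℤ))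

/-- The set `B(v)` of agent edges of `𝔇_n` belonging to the vertex `v`. -/
def Belongs (n : ℕ) (v : BV) (e : DV × DV) : Prop :=
  ∃ w, DEdgePair n v w ∧
    (e = (DV.x v w, DV.y v w) ∨ e = (DV.base v, DV.x v w) ∨ e = (DV.x v w, DV.base v))

/-- Applying the improving switch `e` to the policy `π` yields `π'`. -/
def DApply (n : ℕ) (p : BV → ℚ) (π : DV → DV) (e : DV × DV) (π' : DV → DV) : Prop :=
  DImproving n p π e.1 e.2 ∧ π' = Function.update π e.1 e.2

/-- One step of Bland's policy iteration on `𝔇_n` with edge numbering `N`. -/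
def IsBlandStepD (n : ℕ) (p : BV → ℚ) (N : DV → DV → ℕ) (π π' : DV → DV) : Prop :=
  ∃ u u', DImproving n p π u u' ∧ (∀ a b, DImproving n p π a b → N u u' ≤ N a b) ∧
    π' = Function.update π u u'

/-- One step of Dantzig's policy iteration on `𝔇_n`: apply an improving switch of maximal
reduced costs. -/
def DantzigStep (n : ℕ) (p : BV → ℚ) (π π' : DV → DV) : Prop :=
  ∃ u u', DImproving n p π u u' ∧
    (∀ a b, DImproving n p π a b → zD n p π a b ≤ zD n p π u u') ∧
    π' = Function.update π u u'

/-- The finite set of vertices of `𝔅_n`, as a `Finset`. -/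
noncomputable def BVSet (n : ℕ) : Finset BV :=
  {BV.t, BV.d, BV.s} ∪ (Finset.Icc 1 n).image BV.a ∪ (Finset.Icc 1 n).image BV.b

/-- The finite set of agent vertices of `𝔇_n`, as a `Finset`. -/
noncomputable def DAgentSet (n : ℕ) : Finset DV := by
  classical
  exact ((BVSet n).image DV.base) ∪
    (((BVSet n ×ˢ BVSet n).filter fun e => DEdgePair n e.1 e.2).image fun e => DV.x e.1 e.2) ∪
    (((BVSet n ×ˢ BVSet n).filter fun e => DEdgePair n e.1 e.2).image fun e => DV.z e.1 e.2)

/-- The objective of the Largest Increase rule: the sum of the values of all agent vertices. -/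
noncomputable def LIobj (n : ℕ) (p : BV → ℚ) (π : DV → DV) : ℚ :=
  ∑ u ∈ DAgentSet n, DVal n p π u

/-- One step of the Largest Increase policy iteration on `𝔇_n`: apply an improving switch
maximizing the sum of all agent vertex values of the resulting policy. -/
def LIStep (n : ℕ) (p : BV → ℚ) (π π' : DV → DV) : Prop :=
  ∃ u u', DImproving n p π u u' ∧
    (∀ a b, DImproving n p π a b →
      LIobj n p (Function.update π a b) ≤ LIobj n p (Function.update π u u')) ∧
    π' = Function.update π u u'

/-- `N` is a Bland numbering `𝒩_{𝔇_n}` for `𝔇_n`: it is injective on agent edges, the edges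
`(x v w, v)` all come first, within each gadget `(x v w, y v w)` precedes `(v, x v w)`,
the gadget blocks are ordered according to `𝒩_{𝔅_n}`, and the self-loop comes last. -/
def IsDBlandNumbering (n : ℕ) (N : DV → DV → ℕ) : Prop :=
  (∀ u₁ u₂ u₁' u₂', DEdge n u₁ u₂ → DEdge n u₁' u₂' → N u₁ u₂ = N u₁' u₂' →
    u₁ = u₁' ∧ u₂ = u₂') ∧
  (∀ v w v' w', DEdgePair n v w → DEdgePair n v' w' →
    N (DV.x v w) (DV.base v) < N (DV.x v' w') (DV.y v' w')) ∧
  (∀ v w, DEdgePair n v w → N (DV.x v w) (DV.y v w) < N (DV.base v) (DV.x v w)) ∧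
  (∀ v w v' w', DEdgePair n v w → DEdgePair n v' w' → NB n v w < NB n v' w' →
    N (DV.base v) (DV.x v w) < N (DV.x v' w') (DV.y v' w')) ∧
  (∀ v w, DEdgePair n v w → N (DV.base v) (DV.x v w) < N (DV.base BV.s) (DV.base BV.s))

/-!
The bits of a binary counter are the levels `i` at which `enter i` is active, and Bland's rule runs
through a fixed cycle of phases. While `travel 1` is active and the levels `1, …, k` are exactly the
trailing ones of the counter, the rule prepares level `k + 1`, applies `stay k`, sets the bit
`k + 1` by `enter (k + 1)` and applies `travel (k + 1)`. It then clears the bits below by `board 1`,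
…, `board (k - 1)`, `skip k`, restores `stay (k - 2)`, …, `stay 1`, and sets the bit `1` again.

In each phase the values of the lower levels differ from the value of `t` by a power of two and a
constant between `0` and `2`, so the signs of all reduced costs there can be read off. Of the levels
above only an upper bound is needed: values are nonincreasing along the levels because of a
compatibility condition on consecutive levels that the run preserves. Thus `skip k` is applied only
when `a (k + 1)` has the same value as `t`, and boarding is worse by `2 ^ k - 5 / 4`. When `enter k`
is applied, the value of `t` is at most that of `b k` plus `2 ^ k - 5 / 4`, while no `a j` has a
larger value than `t`.

The Bellman equations remain available throughout the run because no improving switch closes a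
cycle: rewards are bounded by the increase of a potential, so if the policy leads from `v` back to
`u`, then the reduced costs of `(u, v)` are nonpositive.
-/

/-- The three kinds of edges leaving a vertex `a i`. -/
inductive AMove : Type where
  | enter : AMove
  | skip : AMove
  | board : AMove
deriving DecidableEq

/-- The two kinds of edges leaving a vertex `b i`. -/
inductive BMove : Type where
  | stay : BMove
  | leave : BMove

/-- The edges of `𝔅_n` other than `(d,s)` and `(s,s)`, for all `n` at once: `travel j`,
`atA x i` for the edge of kind `x` at `a i`, and `atB y i` for the edge of kind `y` at `b i`. -/
inductive Switch : Type where
  | travel : ℕ → Switch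
  | atA : AMove → ℕ → Switch
  | atB : BMove → ℕ → Switch

namespace Switch

/-- The index `i` in `travel i`, `enter i`, `skip i`, `board i`, `stay i`, `leave i`. -/
def level : Switch → ℕ
  | travel j => j
  | atA _ i => i
  | atB _ i => i

/-- The block of the Bland numbering containing a switch: the travel edges form block `0`, and the
five edges leaving `a i` and `b i` form block `i`. -/
def block : Switch → ℕ
  | travel _ => 0
  | atA _ i => i
  | atB _ i => i

/-- The position of a switch within its block of the Bland numbering. -/
def slot : Switch → ℕ
  | travel j => j
  | atA .enter _ => 0
  | atA .skip _ => 1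
  | atA .board _ => 2
  | atB .stay _ => 3
  | atB .leave _ => 4

/-- The order of the Bland numbering, which does not depend on `n`. -/
def Precedes (s s' : Switch) : Prop :=
  s.block < s'.block ∨ s.block = s'.block ∧ s.slot < s'.slot

end Switch

/-- A policy for `𝔅_n` described by levels: the target of its travel edge and its choices at the
vertices `a i` and `b i`. Levels above `n` are kept as well, so that the top level needs no special
treatment. -/
structure LevelPolicy where
  target : ℕ
  a : ℕ → AMove
  b : ℕ → BMove

/-- A valuation of the vertices `t`, `a i` and `b i`. -/
structure LevelValues where
  t : ℚ
  a : ℕ → ℚ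
  b : ℕ → ℚ

namespace LevelValues

/-- The reduced costs of a switch with respect to a valuation. -/
def gain (V : LevelValues) : Switch → ℚ
  | .travel j => V.a j - V.t
  | .atA .enter i => 2 ^ i + V.b i - V.a i
  | .atA .skip i => V.a (i + 1) - V.a i
  | .atA .board i => -(2 ^ i) + 5 / 4 + V.t - V.a i
  | .atB .stay i => 3 / 4 + V.b (i + 1) - V.b i
  | .atB .leave i => V.a (i + 1) - V.b i

/-- `s` is the improving switch that Bland's rule selects. -/
structure IsFirst (V : LevelValues) (s : Switch) : Prop where
  one_le_level : 1 ≤ s.level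
  gain_pos : 0 < V.gain s
  gain_nonpos : ∀ s' : Switch, 1 ≤ s'.level → s'.Precedes s → V.gain s' ≤ 0

/-- The claim of the theorem about the switch `s`, provided that `s` is applied. -/
def Beats (V : LevelValues) : Switch → Prop
  | .atA .skip i => V.gain (.atA .board i) < V.gain (.atA .skip i)
  | .atA .enter i => V.gain (.atA .skip i) < V.gain (.atA .enter i) ∧
      V.gain (.atA .board i) < V.gain (.atA .enter i)
  | _ => True

/-- No edge leaving `a i` or `b i` is an improving switch. -/
def Settled (V : LevelValues) (i : ℕ) : Prop :=
  ∀ s : Switch, s.block = i → V.gain s ≤ 0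

variable {V : LevelValues}

lemma settled_of_le {i : ℕ} (hi : 1 ≤ i) (enter : 2 ^ i + V.b i ≤ V.a i)
    (skip : V.a (i + 1) ≤ V.a i) (board : -(2 ^ i) + 5 / 4 + V.t ≤ V.a i)
    (stay : 3 / 4 + V.b (i + 1) ≤ V.b i) (leave : V.a (i + 1) ≤ V.b i) : V.Settled i := by
  rintro (j | ⟨_ | _ | _, i⟩ | ⟨_ | _, i⟩) rfl
  · exact absurd hi (by simp [Switch.block])
  all_goals exact sub_nonpos.2 ‹_›

/-- No travel edge and no edge below level `i` is an improving switch. -/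
structure SettledBelow (V : LevelValues) (i : ℕ) : Prop where
  a_le_t : ∀ j, 1 ≤ j → V.a j ≤ V.t
  settled : ∀ l, 1 ≤ l → l < i → V.Settled l

namespace SettledBelow

variable {i : ℕ}

lemma isFirst {s : Switch} (h : V.SettledBelow s.block) (hs : 1 ≤ s.block)
    (before : ∀ s' : Switch, s'.block = s.block → s'.slot < s.slot → V.gain s' ≤ 0)
    (pos : 0 < V.gain s) : V.IsFirst s where
  one_le_level := by cases s <;> simp_all [Switch.block, Switch.level]
  gain_pos := pos
  gain_nonpos := by
    rintro s' hs' (hlt | ⟨heq, hslot⟩)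
    · cases s' with
      | travel j => exact sub_nonpos.2 (h.a_le_t j hs')
      | atA x l => exact h.settled l hs' hlt _ rfl
      | atB y l => exact h.settled l hs' hlt _ rfl
    · exact before s' heq hslot

variable (h : V.SettledBelow i) (hi : 1 ≤ i)
include h hi

lemma isFirst_enter (enter : V.a i < 2 ^ i + V.b i) : V.IsFirst (.atA .enter i) := by
  refine isFirst h hi ?_ (sub_pos.2 enter)
  rintro (j | ⟨_ | _ | _, l⟩ | ⟨_ | _, l⟩) ⟨⟩ hslot <;> simp only [Switch.slot] at hslot <;> lia

lemma isFirst_skip (enter : 2 ^ i + V.b i ≤ V.a i) (skip : V.a i < V.a (i + 1)) :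
    V.IsFirst (.atA .skip i) := by
  refine isFirst h hi ?_ (sub_pos.2 skip)
  rintro (j | ⟨_ | _ | _, l⟩ | ⟨_ | _, l⟩) ⟨⟩ hslot <;> simp only [Switch.slot] at hslot <;>
    first | lia | exact sub_nonpos.2 ‹_›

lemma isFirst_board (enter : 2 ^ i + V.b i ≤ V.a i) (skip : V.a (i + 1) ≤ V.a i)
    (board : V.a i < -(2 ^ i) + 5 / 4 + V.t) : V.IsFirst (.atA .board i) := by
  refine isFirst h hi ?_ (sub_pos.2 board)
  rintro (j | ⟨_ | _ | _, l⟩ | ⟨_ | _, l⟩) ⟨⟩ hslot <;> simp only [Switch.slot] at hslot <;>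
    first | lia | exact sub_nonpos.2 ‹_›

lemma isFirst_stay (enter : 2 ^ i + V.b i ≤ V.a i) (skip : V.a (i + 1) ≤ V.a i)
    (board : -(2 ^ i) + 5 / 4 + V.t ≤ V.a i) (stay : V.b i < 3 / 4 + V.b (i + 1)) :
    V.IsFirst (.atB .stay i) := by
  refine isFirst h hi ?_ (sub_pos.2 stay)
  rintro (j | ⟨_ | _ | _, l⟩ | ⟨_ | _, l⟩) ⟨⟩ hslot <;> simp only [Switch.slot] at hslot <;>
    first | lia | exact sub_nonpos.2 ‹_›

lemma isFirst_leave (enter : 2 ^ i + V.b i ≤ V.a i) (skip : V.a (i + 1) ≤ V.a i)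
    (board : -(2 ^ i) + 5 / 4 + V.t ≤ V.a i) (stay : 3 / 4 + V.b (i + 1) ≤ V.b i)
    (leave : V.b i < V.a (i + 1)) : V.IsFirst (.atB .leave i) := by
  refine isFirst h hi ?_ (sub_pos.2 leave)
  rintro (j | ⟨_ | _ | _, l⟩ | ⟨_ | _, l⟩) ⟨⟩ hslot <;> simp only [Switch.slot] at hslot <;>
    first | lia | exact sub_nonpos.2 ‹_›

end SettledBelow

end LevelValues

namespace LevelPolicy

/-- The switch is active in the policy. -/
def Active (S : LevelPolicy) : Switch → Prop
  | .travel j => S.target = j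
  | .atA x i => S.a i = x
  | .atB y i => S.b i = y

/-- The policy obtained by applying a switch. -/
def apply (S : LevelPolicy) : Switch → LevelPolicy
  | .travel j => { S with target := j }
  | .atA x i => { S with a := Function.update S.a i x }
  | .atB y i => { S with b := Function.update S.b i y }

variable {S : LevelPolicy} {x : AMove} {y : BMove} {i j k m : ℕ}

lemma apply_atA_target : (S.apply (.atA x i)).target = S.target := rfl

lemma apply_atA_a : (S.apply (.atA x i)).a j = if j = i then x else S.a j :=
  Function.update_apply ..

lemma apply_atA_b : (S.apply (.atA x i)).b = S.b := rfl

lemma apply_atB_a : (S.apply (.atB y i)).a = S.a := rfl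

lemma apply_atB_b : (S.apply (.atB y i)).b j = if j = i then y else S.b j :=
  Function.update_apply ..

/-- The compatibility between levels `i` and `i + 1` that makes the level values `levelValue`
nonincreasing from `i` to `i + 1`. -/
structure Fits (S : LevelPolicy) (i : ℕ) : Prop where
  ne_board_of_leave : S.b i = .leave → S.a (i + 1) ≠ .board
  enter_of_skip_stay : S.b i = .stay → S.a i = .skip → S.a (i + 1) = .enter
  board_of_ne_skip_stay : S.b i = .stay → S.a i ≠ .skip → S.a (i + 1) = .board

/-- All levels from `m` on are compatible with the next one. -/
def FitsFrom (S : LevelPolicy) (m : ℕ) : Prop := ∀ i, m ≤ i → S.Fits i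

/-- `enter i` and `leave i` are active for all `i < k`, i.e. the counter has trailing ones there. -/
def EnterLeaveBelow (S : LevelPolicy) (k : ℕ) : Prop :=
  ∀ i, 1 ≤ i → i < k → S.a i = .enter ∧ S.b i = .leave

/-- The phase between two flips of higher bits: bit `1` is set, and all levels are compatible. -/
structure Counting (S : LevelPolicy) : Prop where
  one_le_target : 1 ≤ S.target
  target_ne_board : S.a S.target ≠ .board
  enter_one : S.a 1 = .enter
  fits : S.FitsFrom 1

/-- The phase after applying `stay k`, where the bit `k + 1` is about to be set. -/
structure Stayed (S : LevelPolicy) (k : ℕ) : Prop where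
  target_eq : S.target = 1
  one_le : 1 ≤ k
  below : S.EnterLeaveBelow k
  enter : S.a k = .enter
  stay : S.b k = .stay
  succ : S.a (k + 1) = .board ∨ S.a (k + 1) = .skip ∧ S.b (k + 1) = .leave
  fits : S.FitsFrom (k + 1)

/-- The phase after setting the bit `k + 1`, before travelling to it. -/
structure Entered (S : LevelPolicy) (k : ℕ) : Prop where
  target_eq : S.target = 1
  one_le : 1 ≤ k
  below : S.EnterLeaveBelow k
  enter : S.a k = .enter
  stay : S.b k = .stay
  enter_succ : S.a (k + 1) = .enter
  fits : S.FitsFrom (k + 1)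

/-- The phase after travelling to `k + 1`: the bits below `j` have been cleared by boarding. -/
structure Boarding (S : LevelPolicy) (k j : ℕ) : Prop where
  target_eq : S.target = k + 1
  one_le : 1 ≤ j
  le : j ≤ k
  board : ∀ i, 1 ≤ i → i < j → S.a i = .board
  enter : ∀ i, j ≤ i → i ≤ k → S.a i = .enter
  leave : ∀ i, 1 ≤ i → i < k → S.b i = .leave
  stay : S.b k = .stay
  enter_succ : S.a (k + 1) = .enter
  fits : S.FitsFrom (k + 1)

/-- The phase after clearing the bit `m` by skipping: the edges `stay i` with `j < i < m - 1` have
been restored, and `stay j` comes next. The initial policy is the case `m = 1`, `j = 0`, which is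
the only one where the travel edge leads to `m` rather than `m + 1`. -/
structure Restoring (S : LevelPolicy) (m j : ℕ) : Prop where
  target_eq : S.target = m ∨ S.target = m + 1
  one_le : 1 ≤ m
  le : j ≤ m - 2
  board : ∀ i, 1 ≤ i → i < m → S.a i = .board
  skip : S.a m = .skip
  leave : ∀ i, 1 ≤ i → i ≤ j → S.b i = .leave
  fits : S.FitsFrom (j + 1)

/-- The invariant of the run: the policy is in one of the five phases. -/
inductive InPhase (S : LevelPolicy) : Prop
  | counting (h : S.Counting)
  | stayed (k : ℕ) (h : S.Stayed k)
  | entered (k : ℕ) (h : S.Entered k)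
  | boarding (k j : ℕ) (h : S.Boarding k j)
  | restoring (m j : ℕ) (h : S.Restoring m j)

/-! ### Phase changes -/

lemma FitsFrom.congr_of_le {S' : LevelPolicy} (h : S.FitsFrom m)
    (a : ∀ i, m ≤ i → S'.a i = S.a i) (b : ∀ i, m ≤ i → S'.b i = S.b i) : S'.FitsFrom m := by
  intro i hi
  obtain ⟨h₁, h₂, h₃⟩ := h i hi
  constructor <;> simpa only [a i hi, a (i + 1) (by lia), b i hi]

lemma FitsFrom.apply_enter (h : S.FitsFrom m) (hm : S.a m ≠ .skip ∨ S.b m = .leave) :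
    (S.apply (.atA .enter m)).FitsFrom m := by
  intro i hi
  obtain ⟨h₁, h₂, h₃⟩ := h i hi
  constructor <;> simp only [apply_atA_a, apply_atA_b] <;> grind

lemma FitsFrom.apply_leave (h : S.FitsFrom m) (hi : S.a (i + 1) = .enter) :
    (S.apply (.atB .leave i)).FitsFrom m := by
  intro l hl
  obtain ⟨h₁, h₂, h₃⟩ := h l hl
  constructor <;> simp only [apply_atB_a, apply_atB_b] <;> grind

lemma Counting.apply_travel_one (h : S.Counting) : (S.apply (.travel 1)).Counting where
  one_le_target := le_rfl
  target_ne_board := by simp [apply, h.enter_one]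
  enter_one := h.enter_one
  fits := h.fits.congr_of_le (fun _ _ => rfl) fun _ _ => rfl

lemma Counting.apply_leave (h : S.Counting) (hi : S.a (i + 1) = .enter) :
    (S.apply (.atB .leave i)).Counting where
  one_le_target := h.one_le_target
  target_ne_board := h.target_ne_board
  enter_one := h.enter_one
  fits := h.fits.apply_leave hi

lemma Counting.apply_stay (h : S.Counting) (ht : S.target = 1) (hk : 1 ≤ k)
    (below : S.EnterLeaveBelow k) (enter : S.a k = .enter) (skip : S.a (k + 1) = .skip)
    (leave : S.b (k + 1) = .leave) : (S.apply (.atB .stay k)).Stayed k where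
  target_eq := ht
  one_le := hk
  below := fun i hi hik => by simp [apply, below i hi hik, hik.ne]
  enter := enter
  stay := by simp [apply]
  succ := .inr ⟨skip, by simp [apply, leave]⟩
  fits := (show S.FitsFrom (k + 1) from fun i hi => h.fits i (by lia)).congr_of_le
    (fun _ _ => rfl) fun i hi => Function.update_of_ne (by lia) _ _

lemma Counting.stayed (h : S.Counting) (ht : S.target = 1) (hk : 1 ≤ k)
    (below : S.EnterLeaveBelow k) (enter : S.a k = .enter) (stay : S.b k = .stay) :
    S.Stayed k where
  target_eq := ht
  one_le := hk
  below := below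
  enter := enter
  stay := stay
  succ := .inl ((h.fits k hk).board_of_ne_skip_stay stay (by simp [enter]))
  fits := fun i hi => h.fits i (by lia)

lemma Stayed.apply_enter (h : S.Stayed k) : (S.apply (.atA .enter (k + 1))).Entered k where
  target_eq := h.target_eq
  one_le := h.one_le
  below := fun i hi hik => by
    have : i ≠ k + 1 := by lia
    simp [apply, h.below i hi hik, this]
  enter := by simp [apply, h.enter]
  stay := h.stay
  enter_succ := by simp [apply]
  fits := h.fits.apply_enter (h.succ.imp (by simp +contextual) And.right)

lemma Entered.apply_travel (h : S.Entered k) : (S.apply (.travel (k + 1))).Boarding k 1 where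
  target_eq := rfl
  one_le := le_rfl
  le := h.one_le
  board := by lia
  enter := fun i hi hik => hik.lt_or_eq.elim (fun hlt => (h.below i hi hlt).1) (· ▸ h.enter)
  leave := fun i hi hik => (h.below i hi hik).2
  stay := h.stay
  enter_succ := h.enter_succ
  fits := h.fits.congr_of_le (fun _ _ => rfl) fun _ _ => rfl

lemma Boarding.apply_board (h : S.Boarding k j) (hj : j < k) :
    (S.apply (.atA .board j)).Boarding k (j + 1) where
  target_eq := h.target_eq
  one_le := by lia
  le := hj
  board := by grind [apply_atA_a, h.board]
  enter := by grind [apply_atA_a, h.enter]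
  leave := h.leave
  stay := h.stay
  enter_succ := by grind [apply_atA_a, h.enter_succ]
  fits := h.fits.congr_of_le (fun i hi => Function.update_of_ne (by lia) _ _) fun _ _ => rfl

lemma Boarding.apply_skip (h : S.Boarding k k) :
    (S.apply (.atA .skip k)).Restoring k (k - 2) where
  target_eq := .inr h.target_eq
  one_le := h.one_le
  le := le_rfl
  board := by grind [apply_atA_a, h.board]
  skip := by simp [apply]
  leave := fun i hi hik => h.leave i hi (by lia)
  fits := by
    intro i hi
    obtain hki | rfl | hik : k + 1 ≤ i ∨ i = k ∨ i + 1 = k := by lia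
    · exact h.fits.congr_of_le (S' := S.apply (.atA .skip k))
        (fun i hi => Function.update_of_ne (by lia) _ _) (fun _ _ => rfl) i hki
    · constructor <;> simp [apply, h.stay, h.enter_succ]
    · subst hik
      have leave := h.leave i (by lia) i.lt_succ_self
      constructor <;> simp [apply, leave]

lemma Restoring.apply_stay (h : S.Restoring m (j + 1)) :
    (S.apply (.atB .stay (j + 1))).Restoring m j where
  target_eq := h.target_eq
  one_le := h.one_le
  le := by have := h.le; lia
  board := h.board
  skip := h.skip
  leave := fun i hi hij => by
    have : i ≠ j + 1 := by lia
    simp [apply, this, h.leave i hi (by lia)]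
  fits := by
    have := h.le
    intro i hi
    obtain rfl | hji := hi.eq_or_lt
    · constructor <;>
        simp [apply, h.board (j + 1) (by lia) (by lia), h.board (j + 1 + 1) (by lia) (by lia)]
    · exact h.fits.congr_of_le (S' := S.apply (.atB .stay (j + 1))) (fun _ _ => rfl)
        (fun i hi => Function.update_of_ne (by lia) _ _) i hji

lemma Restoring.apply_leave (h : S.Restoring 1 0) (enter : S.a 2 = .enter) :
    (S.apply (.atB .leave 1)).Restoring 1 0 where
  target_eq := h.target_eq
  one_le := h.one_le
  le := h.le
  board := h.board
  skip := h.skip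
  leave := by lia
  fits := h.fits.apply_leave enter

lemma Restoring.apply_enter (h : S.Restoring m 0) (hm : m ≠ 1 ∨ S.b 1 = .leave) :
    (S.apply (.atA .enter 1)).Counting where
  one_le_target := h.target_eq.elim (·.symm ▸ h.one_le) (·.symm ▸ by lia)
  target_ne_board := by
    have := h.one_le
    have := h.skip
    obtain ⟨h₁, h₂, -⟩ := h.fits m (by lia)
    rcases h.target_eq with ht | ht
    · grind [apply_atA_a, apply_atA_target]
    · cases hb : S.b m <;> grind [apply_atA_a, apply_atA_target]
  enter_one := by simp [apply]
  fits := h.fits.apply_enter <| hm.imp_left fun hm => by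
    simp [h.board 1 le_rfl (by have := h.one_le; lia)]

end LevelPolicy

/-! ### Values -/

lemma two_le_two_pow_of_one_le {i : ℕ} (hi : 1 ≤ i) : (2 : ℚ) ≤ 2 ^ i :=
  le_self_pow₀ one_le_two (by lia)

/-- `V` satisfies the Bellman equations of the policy `S`. -/
def LevelValues.IsValueOf (V : LevelValues) (S : LevelPolicy) : Prop :=
  ∀ s : Switch, 1 ≤ s.level → S.Active s → V.gain s = 0

/-- The value of entering the hypothetical route through level `i` that never boards: a level with
`board i` active is bypassed at `b i`. -/
def LevelPolicy.levelValue (S : LevelPolicy) (V : LevelValues) (i : ℕ) : ℚ :=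
  if S.a i = .board then V.b i else V.a i

namespace LevelValues.IsValueOf

open LevelPolicy

variable {V : LevelValues} {S : LevelPolicy} {i j k m : ℕ}

lemma t_eq (hV : V.IsValueOf S) (ht : 1 ≤ S.target) : V.t = V.a S.target :=
  (sub_eq_zero.1 (hV (.travel S.target) ht rfl)).symm

lemma a_of_enter (hV : V.IsValueOf S) (hi : 1 ≤ i) (h : S.a i = .enter) :
    V.a i = 2 ^ i + V.b i :=
  (sub_eq_zero.1 (hV (.atA .enter i) hi h)).symm

lemma a_of_skip (hV : V.IsValueOf S) (hi : 1 ≤ i) (h : S.a i = .skip) : V.a i = V.a (i + 1) :=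
  (sub_eq_zero.1 (hV (.atA .skip i) hi h)).symm

lemma a_of_board (hV : V.IsValueOf S) (hi : 1 ≤ i) (h : S.a i = .board) :
    V.a i = -(2 ^ i) + 5 / 4 + V.t :=
  (sub_eq_zero.1 (hV (.atA .board i) hi h)).symm

lemma b_of_stay (hV : V.IsValueOf S) (hi : 1 ≤ i) (h : S.b i = .stay) :
    V.b i = 3 / 4 + V.b (i + 1) :=
  (sub_eq_zero.1 (hV (.atB .stay i) hi h)).symm

lemma b_of_leave (hV : V.IsValueOf S) (hi : 1 ≤ i) (h : S.b i = .leave) : V.b i = V.a (i + 1) :=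
  (sub_eq_zero.1 (hV (.atB .leave i) hi h)).symm

lemma levelValue_succ_le_b (hV : V.IsValueOf S) (hi : 1 ≤ i) (h : S.Fits i)
    (hab : S.a i ≠ .skip ∨ S.b i = .leave) : S.levelValue V (i + 1) ≤ V.b i := by
  cases hb : S.b i with
  | leave => simp [levelValue, h.ne_board_of_leave hb, hV.b_of_leave hi hb]
  | stay =>
    have hboard := h.board_of_ne_skip_stay hb (by simpa [hb] using hab)
    calc S.levelValue V (i + 1) = V.b (i + 1) := by simp [levelValue, hboard]
      _ ≤ V.b i := by linarith [hV.b_of_stay hi hb]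

lemma levelValue_succ_le (hV : V.IsValueOf S) (hi : 1 ≤ i) (h : S.Fits i) :
    S.levelValue V (i + 1) ≤ S.levelValue V i := by
  cases ha : S.a i with
  | enter =>
    calc S.levelValue V (i + 1) ≤ V.b i := hV.levelValue_succ_le_b hi h (by simp [ha])
      _ ≤ V.a i := by simp [hV.a_of_enter hi ha]
      _ = S.levelValue V i := by simp [levelValue, ha]
  | skip =>
    have hne : S.a (i + 1) ≠ .board := by
      cases hb : S.b i with
      | leave => exact h.ne_board_of_leave hb
      | stay => simp [h.enter_of_skip_stay hb ha]
    simp [levelValue, ha, hne, hV.a_of_skip hi ha]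
  | board =>
    calc S.levelValue V (i + 1) ≤ V.b i := hV.levelValue_succ_le_b hi h (by simp [ha])
      _ = S.levelValue V i := by simp [levelValue, ha]

lemma levelValue_antitone (hV : V.IsValueOf S) (hm : 1 ≤ m) (h : S.FitsFrom m) (hmj : m ≤ j) :
    S.levelValue V j ≤ S.levelValue V m := by
  induction j, hmj using Nat.le_induction with
  | base => exact le_rfl
  | succ j hmj ih => exact (hV.levelValue_succ_le (hm.trans hmj) (h j hmj)).trans ih

lemma a_le_levelValue (hV : V.IsValueOf S) (hm : 1 ≤ m) (h : S.FitsFrom m) (hmj : m ≤ j)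
    (hj : S.a j ≠ .board) : V.a j ≤ S.levelValue V m := by
  simpa [levelValue, hj] using hV.levelValue_antitone hm h hmj

lemma a_le_t (hV : V.IsValueOf S) (h : ∀ j, 1 ≤ j → S.a j ≠ .board → V.a j ≤ V.t) (hj : 1 ≤ j) :
    V.a j ≤ V.t := by
  by_cases hboard : S.a j = .board
  · linarith [hV.a_of_board hj hboard, two_le_two_pow_of_one_le hj]
  · exact h j hj hboard

section EnterLeaveBelow

variable (hV : V.IsValueOf S) (ht : S.target = 1) (below : S.EnterLeaveBelow k)
include hV ht below

lemma t_eq_of_enterLeaveBelow (hi : 1 ≤ i) (hik : i ≤ k) : V.t = V.a i + 2 ^ i - 2 := by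
  induction i, hi using Nat.le_induction with
  | base => simp [hV.t_eq ht.ge, ht]
  | succ i hi ih =>
    obtain ⟨henter, hleave⟩ := below i hi hik
    linarith [ih (by lia), hV.a_of_enter hi henter, hV.b_of_leave hi hleave, pow_succ (2 : ℚ) i]

lemma settled_of_enterLeaveBelow (enter : S.a k = .enter) (hi : 1 ≤ i) (hik : i < k) :
    V.Settled i := by
  obtain ⟨henter, hleave⟩ := below i hi hik
  have ha := hV.a_of_enter hi henter
  have hb := hV.b_of_leave hi hleave
  have ht' := hV.t_eq_of_enterLeaveBelow ht below hi hik.le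
  have henter' : S.a (i + 1) = .enter := by
    rcases (Nat.succ_le_of_lt hik).eq_or_lt with rfl | hlt
    · exact enter
    · exact (below (i + 1) (by lia) hlt).1
  have ha' := hV.a_of_enter (by lia) henter'
  have hpow := two_le_two_pow_of_one_le hi
  have hpow' := two_le_two_pow_of_one_le (i := i + 1) (by lia)
  apply settled_of_le hi <;> linarith

end EnterLeaveBelow

end LevelValues.IsValueOf

namespace LevelPolicy

variable {S : LevelPolicy} {V : LevelValues} {i j k m : ℕ}

/-- The switch `s` is the one selected by Bland's rule at `S`, it has the claimed property, and it
leads to another phase. Travelling only to set bits keeps the target at most `n`. -/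
structure Transition (S : LevelPolicy) (V : LevelValues) (s : Switch) : Prop where
  isFirst : V.IsFirst s
  beats : V.Beats s
  enter_of_travel : ∀ j, s = .travel j → S.a j = .enter
  inPhase : (S.apply s).InPhase

/-! ### The counting phase -/

lemma Counting.transition_travel_one (h : S.Counting) (hV : V.IsValueOf S) (ht : S.target ≠ 1) :
    S.Transition V (.travel 1) where
  isFirst :=
    have two_le : 1 + 1 ≤ S.target := by have := h.one_le_target; lia
    have t_le : V.t ≤ V.b 1 := calc
      V.t = V.a S.target := hV.t_eq h.one_le_target
      _ ≤ S.levelValue V 2 :=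
        hV.a_le_levelValue one_le_two (fun i hi => h.fits i (by lia)) two_le h.target_ne_board
      _ ≤ V.b 1 :=
        hV.levelValue_succ_le_b le_rfl (h.fits 1 le_rfl) (.inl (by simp [h.enter_one]))
    { one_le_level := le_rfl
      gain_pos := by
        have := hV.a_of_enter le_rfl h.enter_one
        simp only [LevelValues.gain]
        linarith
      gain_nonpos := by
        rintro (j | ⟨_, i⟩ | ⟨_, i⟩) hs hprec <;>
          simp_all [Switch.level, Switch.Precedes, Switch.block, Switch.slot] }
  beats := trivial
  enter_of_travel := by rintro j ⟨⟩; exact h.enter_one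
  inPhase := .counting h.apply_travel_one

lemma Counting.a_le_t (h : S.Counting) (hV : V.IsValueOf S) (ht : S.target = 1) (hj : 1 ≤ j) :
    V.a j ≤ V.t := by
  refine hV.a_le_t (fun j hj hne => ?_) hj
  calc V.a j ≤ S.levelValue V 1 := hV.a_le_levelValue le_rfl h.fits hj hne
    _ = V.t := by simp [levelValue, h.enter_one, hV.t_eq ht.ge, ht]

lemma Counting.transition_leave (h : S.Counting) (hV : V.IsValueOf S) (ht : S.target = 1)
    (hk : 1 ≤ k) (below : S.EnterLeaveBelow k) (enter : S.a k = .enter) (leave : S.b k = .leave)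
    (skip : S.a (k + 1) = .skip) (stay : S.b (k + 1) = .stay) :
    S.Transition V (.atB .leave (k + 1)) := by
  have henter : S.a (k + 1 + 1) = .enter :=
    (h.fits (k + 1) (by lia)).enter_of_skip_stay stay skip
  have hak := hV.a_of_enter hk enter
  have hbk := hV.b_of_leave hk leave
  have hak₁ := hV.a_of_skip (by lia) skip
  have hbk₁ := hV.b_of_stay (by lia) stay
  have hak₂ := hV.a_of_enter (by lia) henter
  have htk := hV.t_eq_of_enterLeaveBelow ht below hk le_rfl
  have hpow := two_le_two_pow_of_one_le hk
  have hpow₁ := pow_succ (2 : ℚ) k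
  have hpow₂ := pow_succ (2 : ℚ) (k + 1)
  have settled : V.Settled k := by apply LevelValues.settled_of_le hk <;> linarith
  have settledBelow : V.SettledBelow (k + 1) := by
    refine ⟨fun _ => h.a_le_t hV ht, fun i hi hik => ?_⟩
    obtain rfl | hlt := (Nat.le_of_lt_succ hik).eq_or_lt
    · exact settled
    · exact hV.settled_of_enterLeaveBelow ht below enter hi hlt
  refine ⟨settledBelow.isFirst_leave (by lia) ?_ ?_ ?_ ?_ ?_, trivial, by lia,
    .counting (h.apply_leave henter)⟩ <;> linarith

lemma Counting.transition_stay (h : S.Counting) (hV : V.IsValueOf S) (ht : S.target = 1)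
    (hk : 1 ≤ k) (below : S.EnterLeaveBelow k) (enter : S.a k = .enter) (leave : S.b k = .leave)
    (skip : S.a (k + 1) = .skip) (leave_succ : S.b (k + 1) = .leave) :
    S.Transition V (.atB .stay k) := by
  have hak := hV.a_of_enter hk enter
  have hbk := hV.b_of_leave hk leave
  have hak₁ := hV.a_of_skip (by lia) skip
  have hbk₁ := hV.b_of_leave (by lia) leave_succ
  have htk := hV.t_eq_of_enterLeaveBelow ht below hk le_rfl
  have hpow := two_le_two_pow_of_one_le hk
  have settledBelow : V.SettledBelow k :=
    ⟨fun _ => h.a_le_t hV ht, fun _ => hV.settled_of_enterLeaveBelow ht below enter⟩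
  refine ⟨settledBelow.isFirst_stay hk ?_ ?_ ?_ ?_, trivial, by lia,
    .stayed k (h.apply_stay ht hk below enter skip leave_succ)⟩ <;> linarith

lemma exists_enterLeaveBelow (enter_one : S.a 1 = .enter) (hS : ∃ i, 1 ≤ i ∧ S.a i ≠ .enter) :
    ∃ k, 1 ≤ k ∧ S.EnterLeaveBelow k ∧ S.a k = .enter ∧
      (S.b k = .leave → S.a (k + 1) ≠ .enter) := by
  by_contra! hnot
  have key : ∀ k, 1 ≤ k → S.EnterLeaveBelow k ∧ S.a k = .enter := by
    intro k hk
    induction k, hk using Nat.le_induction with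
    | base => exact ⟨fun i hi hik => by lia, enter_one⟩
    | succ k hk ih =>
      obtain ⟨hleave, henter⟩ := hnot k hk ih.1 ih.2
      refine ⟨fun i hi hik => ?_, henter⟩
      obtain rfl | hlt := (Nat.le_of_lt_succ hik).eq_or_lt
      · exact ⟨ih.2, hleave⟩
      · exact ih.1 i hi hlt
  obtain ⟨i, hi, hne⟩ := hS
  exact hne (key i hi).2

/-! ### Flipping the bit -/

section Stayed

variable (h : S.Stayed k) (hV : V.IsValueOf S)
include h hV

lemma Stayed.t_eq : V.t = V.b (k + 1) + 2 ^ (k + 1) - 5 / 4 := by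
  linarith [hV.t_eq_of_enterLeaveBelow h.target_eq h.below h.one_le le_rfl,
    hV.a_of_enter h.one_le h.enter, hV.b_of_stay h.one_le h.stay, pow_succ (2 : ℚ) k]

lemma Stayed.a_succ_eq : V.a (k + 1) = V.b (k + 1) := by
  rcases h.succ with hboard | ⟨hskip, hleave⟩
  · linarith [hV.a_of_board (by lia) hboard, h.t_eq hV]
  · rw [hV.a_of_skip (by lia) hskip, hV.b_of_leave (by lia) hleave]

lemma Stayed.a_le_t (hj : 1 ≤ j) : V.a j ≤ V.t := by
  refine hV.a_le_t (fun j hj hne => ?_) hj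
  obtain hjk | hkj : j ≤ k ∨ k + 1 ≤ j := by lia
  · linarith [hV.t_eq_of_enterLeaveBelow h.target_eq h.below hj hjk,
      two_le_two_pow_of_one_le hj]
  · calc V.a j ≤ S.levelValue V (k + 1) := hV.a_le_levelValue (by lia) h.fits hkj hne
      _ = V.b (k + 1) := by simp [levelValue, h.a_succ_eq hV]
      _ ≤ V.t := by linarith [h.t_eq hV, two_le_two_pow_of_one_le (i := k + 1) (by lia)]

lemma Stayed.settled (hi : 1 ≤ i) (hik : i ≤ k) : V.Settled i := by
  obtain rfl | hlt := hik.eq_or_lt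
  · have ha := hV.a_of_enter hi h.enter
    have hb := hV.b_of_stay hi h.stay
    have ha' := h.a_succ_eq hV
    have ht := h.t_eq hV
    have hpow := two_le_two_pow_of_one_le hi
    have hpow' := pow_succ (2 : ℚ) i
    apply LevelValues.settled_of_le hi <;> linarith
  · exact hV.settled_of_enterLeaveBelow h.target_eq h.below h.enter hi hlt

lemma Stayed.transition : S.Transition V (.atA .enter (k + 1)) := by
  have ht := h.t_eq hV
  have ha := h.a_succ_eq hV
  have hnext := h.a_le_t hV (j := k + 1 + 1) (by lia)
  have hpow := two_le_two_pow_of_one_le (i := k + 1) (by lia)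
  have settledBelow : V.SettledBelow (k + 1) :=
    ⟨fun _ => h.a_le_t hV, fun _ hi hik => h.settled hV hi (Nat.le_of_lt_succ hik)⟩
  refine ⟨settledBelow.isFirst_enter (by lia) ?_, ⟨?_, ?_⟩, by lia, .entered k h.apply_enter⟩ <;>
    (try simp only [LevelValues.gain]) <;> linarith

end Stayed

lemma Entered.transition (h : S.Entered k) (hV : V.IsValueOf S) :
    S.Transition V (.travel (k + 1)) := by
  have ht := hV.t_eq_of_enterLeaveBelow h.target_eq h.below h.one_le le_rfl
  have ha := hV.a_of_enter h.one_le h.enter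
  have hb := hV.b_of_stay h.one_le h.stay
  have ha' := hV.a_of_enter (by lia) h.enter_succ
  refine ⟨⟨?_, ?_, ?_⟩, trivial, by rintro j ⟨⟩; exact h.enter_succ,
    .boarding k 1 h.apply_travel⟩
  · simp [Switch.level]
  · simp only [LevelValues.gain]
    linarith [pow_succ (2 : ℚ) k]
  · rintro (j | ⟨_, i⟩ | ⟨_, i⟩) hj (hlt | ⟨hblock, hslot⟩)
    all_goals simp only [Switch.level, Switch.block, Switch.slot] at *
    · lia
    · have := hV.t_eq_of_enterLeaveBelow h.target_eq h.below hj (by lia)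
      simp only [LevelValues.gain]
      linarith [two_le_two_pow_of_one_le hj]
    all_goals lia

/-! ### Boarding the lower levels -/

section Boarding

variable (h : S.Boarding k j) (hV : V.IsValueOf S)
include h hV

lemma Boarding.t_eq : V.t = V.a (k + 1) := by
  rw [hV.t_eq (by simp [h.target_eq]), h.target_eq]

lemma Boarding.a_eq_of_enter (hji : j ≤ i) (hik : i ≤ k) : V.a i = V.t - 2 ^ i + 3 / 4 := by
  have := h.one_le
  induction hik using Nat.decreasingInduction with
  | self =>
    linarith [hV.a_of_enter (by lia) (h.enter k hji le_rfl), hV.b_of_stay (by lia) h.stay,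
      hV.a_of_enter (by lia) h.enter_succ, h.t_eq hV, pow_succ (2 : ℚ) k]
  | of_succ i hik ih =>
    linarith [hV.a_of_enter (by lia) (h.enter i hji hik.le),
      hV.b_of_leave (by lia) (h.leave i (by lia) hik), ih (by lia), pow_succ (2 : ℚ) i]

lemma Boarding.a_mem_Icc (hi : 1 ≤ i) (hik : i ≤ k) :
    V.a i ∈ Set.Icc (V.t - 2 ^ i + 3 / 4) (V.t - 2 ^ i + 5 / 4) := by
  obtain hij | hji := lt_or_ge i j
  · constructor <;> linarith [hV.a_of_board hi (h.board i hi hij)]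
  · constructor <;> linarith [h.a_eq_of_enter hV hji hik]

lemma Boarding.b_mem_Icc (hi : 1 ≤ i) (hik : i ≤ k) :
    V.b i ∈ Set.Icc (V.t - 2 ^ (i + 1) + 3 / 4) (V.t - 2 ^ (i + 1) + 5 / 4) := by
  obtain rfl | hlt := hik.eq_or_lt
  · have := hV.b_of_stay hi h.stay
    have := hV.a_of_enter (by lia) h.enter_succ
    have := h.t_eq hV
    constructor <;> linarith
  · rw [hV.b_of_leave hi (h.leave i hi hlt)]
    exact h.a_mem_Icc hV (by lia) hlt

lemma Boarding.a_le_t (hi : 1 ≤ i) : V.a i ≤ V.t := by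
  refine hV.a_le_t (fun i hi hne => ?_) hi
  obtain hik | hki : i ≤ k ∨ k + 1 ≤ i := by lia
  · linarith [(h.a_mem_Icc hV hi hik).2, two_le_two_pow_of_one_le hi]
  · calc V.a i ≤ S.levelValue V (k + 1) := hV.a_le_levelValue (by lia) h.fits hki hne
      _ = V.t := by simp [levelValue, h.enter_succ, h.t_eq hV]

lemma Boarding.settled (hi : 1 ≤ i) (hij : i < j) : V.Settled i := by
  have hik : i < k := hij.trans_le h.le
  have ha := hV.a_of_board hi (h.board i hi hij)
  have hb := hV.b_of_leave hi (h.leave i hi hik)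
  obtain ⟨hbl, hbu⟩ := h.b_mem_Icc hV hi hik.le
  obtain ⟨-, hbu'⟩ := h.b_mem_Icc hV (i := i + 1) (by lia) hik
  have hpow := two_le_two_pow_of_one_le hi
  have hpow₁ := pow_succ (2 : ℚ) i
  have hpow₂ := pow_succ (2 : ℚ) (i + 1)
  apply LevelValues.settled_of_le hi <;> linarith

lemma Boarding.transition_board (hjk : j < k) : S.Transition V (.atA .board j) := by
  have hj := h.one_le
  have henter := hV.a_of_enter hj (h.enter j le_rfl h.le)
  have ha := h.a_eq_of_enter hV le_rfl h.le
  have ha' := h.a_eq_of_enter hV (i := j + 1) (by lia) hjk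
  have hpow := two_le_two_pow_of_one_le hj
  have hpow' := pow_succ (2 : ℚ) j
  have settledBelow : V.SettledBelow j := ⟨fun _ => h.a_le_t hV, fun _ => h.settled hV⟩
  refine ⟨settledBelow.isFirst_board hj ?_ ?_ ?_, trivial, by lia,
    .boarding k (j + 1) (h.apply_board hjk)⟩ <;> linarith

end Boarding

lemma Boarding.transition_skip (h : S.Boarding k k) (hV : V.IsValueOf S) :
    S.Transition V (.atA .skip k) := by
  have hk := h.one_le
  have henter := hV.a_of_enter hk (h.enter k le_rfl le_rfl)
  have ha := h.a_eq_of_enter hV le_rfl le_rfl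
  have ht := h.t_eq hV
  have hpow := two_le_two_pow_of_one_le hk
  have settledBelow : V.SettledBelow k := ⟨fun _ => h.a_le_t hV, fun _ => h.settled hV⟩
  refine ⟨settledBelow.isFirst_skip hk ?_ ?_, ?_, by lia, .restoring k (k - 2) h.apply_skip⟩ <;>
    (try simp only [LevelValues.Beats, LevelValues.gain]) <;> linarith

/-! ### Restoring the lower levels -/

section Restoring

variable (h : S.Restoring m j) (hV : V.IsValueOf S)
include h hV

lemma Restoring.a_eq_t : V.a m = V.t := by
  have hm := h.one_le
  rcases h.target_eq with ht | ht
  · rw [hV.t_eq (by lia), ht]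
  · rw [hV.t_eq (by lia), ht, hV.a_of_skip hm h.skip]

lemma Restoring.levelValue_eq_t : S.levelValue V m = V.t := by
  simp [levelValue, h.skip, h.a_eq_t hV]

lemma Restoring.a_le_t (hi : 1 ≤ i) : V.a i ≤ V.t := by
  have := h.le
  refine hV.a_le_t (fun i hi hne => ?_) hi
  have hmi : m ≤ i := by
    by_contra! him
    exact hne (h.board i hi him)
  have hm := h.one_le
  calc V.a i ≤ S.levelValue V m :=
        hV.a_le_levelValue hm (fun i hi => h.fits i (by lia)) hmi hne
    _ = V.t := h.levelValue_eq_t hV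

lemma Restoring.t_le_b (hji : j < i) (him : i < m) : V.t ≤ V.b i :=
  calc V.t = S.levelValue V m := (h.levelValue_eq_t hV).symm
    _ ≤ S.levelValue V i :=
      hV.levelValue_antitone (by lia) (fun l hl => h.fits l (by lia)) him.le
    _ = V.b i := by simp [levelValue, h.board i (by lia) him]

lemma Restoring.b_eq (hi : 1 ≤ i) (hij : i ≤ j) : V.b i = -(2 ^ (i + 1)) + 5 / 4 + V.t := by
  have := h.le
  rw [hV.b_of_leave hi (h.leave i hi hij), hV.a_of_board (by lia) (h.board _ (by lia) (by lia))]

lemma Restoring.settled (hi : 1 ≤ i) (hij : i < j) : V.Settled i := by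
  have := h.le
  have ha := hV.a_of_board hi (h.board i hi (by lia))
  have ha' := hV.a_of_board (by lia) (h.board (i + 1) (by lia) (by lia))
  have hb := h.b_eq hV hi hij.le
  have hb' := h.b_eq hV (i := i + 1) (by lia) hij
  have hpow := two_le_two_pow_of_one_le hi
  have hpow₁ := pow_succ (2 : ℚ) i
  have hpow₂ := pow_succ (2 : ℚ) (i + 1)
  apply LevelValues.settled_of_le hi <;> linarith

end Restoring

lemma Restoring.transition_stay (h : S.Restoring m (j + 1)) (hV : V.IsValueOf S) :
    S.Transition V (.atB .stay (j + 1)) := by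
  have := h.le
  have ha := hV.a_of_board (by lia) (h.board (j + 1) (by lia) (by lia))
  have ha' := hV.a_of_board (by lia) (h.board (j + 1 + 1) (by lia) (by lia))
  have hb := h.b_eq hV (i := j + 1) (by lia) le_rfl
  have hb' := h.t_le_b hV (i := j + 1 + 1) (by lia) (by lia)
  have hpow := two_le_two_pow_of_one_le (i := j + 1) (by lia)
  have hpow' := pow_succ (2 : ℚ) (j + 1)
  have settledBelow : V.SettledBelow (j + 1) := ⟨fun _ => h.a_le_t hV, fun _ => h.settled hV⟩
  refine ⟨settledBelow.isFirst_stay (by lia) ?_ ?_ ?_ ?_, trivial, by lia,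
    .restoring m j h.apply_stay⟩ <;> linarith

lemma Restoring.transition_leave (h : S.Restoring 1 0) (hV : V.IsValueOf S)
    (stay : S.b 1 = .stay) : S.Transition V (.atB .leave 1) := by
  have henter : S.a (1 + 1) = .enter := (h.fits 1 le_rfl).enter_of_skip_stay stay h.skip
  have ha := hV.a_of_skip le_rfl h.skip
  have hb := hV.b_of_stay le_rfl stay
  have ha' := hV.a_of_enter (by lia) henter
  have hpow := pow_succ (2 : ℚ) 1
  have ht := h.a_eq_t hV
  have settledBelow : V.SettledBelow 1 := ⟨fun _ => h.a_le_t hV, by lia⟩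
  refine ⟨settledBelow.isFirst_leave le_rfl ?_ ?_ ?_ ?_ ?_, trivial, by lia,
    .restoring 1 0 (h.apply_leave henter)⟩ <;> linarith [pow_one (2 : ℚ)]

lemma Restoring.transition_enter (h : S.Restoring m 0) (hV : V.IsValueOf S)
    (hm : m ≠ 1 ∨ S.b 1 = .leave) : S.Transition V (.atA .enter 1) := by
  have key : -(2 : ℚ) + 5 / 4 + V.t ≤ V.a 1 ∧ V.t ≤ V.b 1 := by
    have := h.one_le
    obtain rfl | hm1 := eq_or_ne m 1
    · have ht := h.a_eq_t hV
      exact ⟨by linarith,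
        by rw [← ht, hV.a_of_skip le_rfl h.skip, hV.b_of_leave le_rfl (by simpa using hm)]⟩
    · exact ⟨by simpa using (hV.a_of_board le_rfl (h.board 1 le_rfl (by lia))).ge,
        h.t_le_b hV (by lia) (by lia)⟩
  have ha := h.a_le_t hV le_rfl
  have ha' := h.a_le_t hV (i := 1 + 1) (by lia)
  have settledBelow : V.SettledBelow 1 := ⟨fun _ => h.a_le_t hV, by lia⟩
  refine ⟨settledBelow.isFirst_enter le_rfl ?_, ⟨?_, ?_⟩, by lia, .counting (h.apply_enter hm)⟩ <;>
    (try simp only [LevelValues.gain]) <;> linarith [pow_one (2 : ℚ)]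

lemma Counting.exists_transition (h : S.Counting) (hV : V.IsValueOf S)
    (hS : ∃ i, 1 ≤ i ∧ S.a i ≠ .enter) : ∃ s, S.Transition V s := by
  by_cases ht : S.target = 1
  · obtain ⟨k, hk, below, enter, hne⟩ := exists_enterLeaveBelow h.enter_one hS
    cases hb : S.b k with
    | stay => exact ⟨_, (h.stayed ht hk below enter hb).transition hV⟩
    | leave =>
      have hskip : S.a (k + 1) = .skip := by
        have hboard := (h.fits k hk).ne_board_of_leave hb
        have henter := hne hb
        cases ha : S.a (k + 1) <;> simp_all
      cases hb' : S.b (k + 1) with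
      | stay => exact ⟨_, h.transition_leave hV ht hk below enter hb hskip hb'⟩
      | leave => exact ⟨_, h.transition_stay hV ht hk below enter hb hskip hb'⟩
  · exact ⟨_, h.transition_travel_one hV ht⟩

lemma Boarding.exists_transition (h : S.Boarding k j) (hV : V.IsValueOf S) :
    ∃ s, S.Transition V s := by
  obtain hjk | rfl := h.le.lt_or_eq
  · exact ⟨_, h.transition_board hV hjk⟩
  · exact ⟨_, h.transition_skip hV⟩

lemma Restoring.exists_transition (h : S.Restoring m j) (hV : V.IsValueOf S) :
    ∃ s, S.Transition V s := by
  rcases j with _ | j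
  · by_cases hm : m ≠ 1 ∨ S.b 1 = .leave
    · exact ⟨_, h.transition_enter hV hm⟩
    · obtain ⟨rfl, hb⟩ : m = 1 ∧ S.b 1 = .stay := by cases hb : S.b 1 <;> simp_all
      exact ⟨_, h.transition_leave hV hb⟩
  · exact ⟨_, h.transition_stay hV⟩

theorem InPhase.exists_transition (h : S.InPhase) (hV : V.IsValueOf S)
    (hS : ∃ i, 1 ≤ i ∧ S.a i ≠ .enter) : ∃ s, S.Transition V s := by
  cases h with
  | counting h => exact h.exists_transition hV hS
  | stayed k h => exact ⟨_, h.transition hV⟩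
  | entered k h => exact ⟨_, h.transition hV⟩
  | boarding k j h => exact h.exists_transition hV
  | restoring m j h => exact h.exists_transition hV

end LevelPolicy

/-! ### Paths in `𝔅_n` -/

lemma exists_iterate_eq_of_measure_lt {α : Type*} {f : α → α} {P : α → Prop} {z : α} (μ : α → ℕ)
    (h : ∀ x, P x → x = z ∨ P (f x) ∧ μ (f x) < μ x) {x : α} (hx : P x) : ∃ k, f^[k] x = z := by
  induction hμ : μ x using Nat.strong_induction_on generalizing x with
  | _ _ ih =>
    subst hμ
    obtain rfl | ⟨hfx, hlt⟩ := h x hx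
    · exact ⟨0, rfl⟩
    · obtain ⟨k, hk⟩ := ih _ hlt hfx rfl
      exact ⟨k + 1, hk⟩

lemma exists_iterate_update_eq {α : Type*} [DecidableEq α] {f : α → α} {u v z : α}
    (hv : ∀ k, f^[k] v ≠ u) (hvz : ∃ k, f^[k] v = z) {w : α} (hw : ∃ k, f^[k] w = z) :
    ∃ k, (Function.update f u v)^[k] w = z := by
  have agree (k : ℕ) : (Function.update f u v)^[k] v = f^[k] v := by
    induction k with
    | zero => rfl
    | succ k ih => simp only [Function.iterate_succ_apply', ih, Function.update_of_ne (hv k)]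
  obtain ⟨k, hk⟩ := hw
  induction k generalizing w with
  | zero => exact ⟨0, hk⟩
  | succ k ih =>
    obtain rfl | hwu := eq_or_ne w u
    · obtain ⟨l, hl⟩ := hvz
      exact ⟨l + 1, by rw [Function.iterate_succ_apply, Function.update_self, agree, hl]⟩
    · obtain ⟨l, hl⟩ := ih hk
      exact ⟨l + 1, by rwa [Function.iterate_succ_apply, Function.update_of_ne hwu]⟩

section Values

variable {n i : ℕ} {π : BV → BV} {u v : BV}

lemma isBVertex_aN (hi : i ≤ n) : IsBVertex n (aN n (i + 1)) := by
  unfold aN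
  split_ifs <;> simp only [IsBVertex]
  lia

lemma isBVertex_bN (hi : i ≤ n) : IsBVertex n (bN n (i + 1)) := by
  unfold bN
  split_ifs <;> simp only [IsBVertex]
  lia

lemma BEdge.isBVertex_left (h : BEdge n u v) : IsBVertex n u := by
  rcases h with ⟨-, -, -, rfl, -⟩ | ⟨i, h₁, h₂, rfl, -⟩ | ⟨i, h₁, h₂, rfl, -⟩ |
    ⟨i, h₁, h₂, rfl, -⟩ | ⟨i, h₁, h₂, rfl, -⟩ | ⟨i, h₁, h₂, rfl, -⟩ | ⟨rfl, -⟩ | ⟨rfl, -⟩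
  · trivial
  · exact ⟨h₁, h₂⟩
  · exact ⟨h₁, h₂⟩
  · exact ⟨h₁, h₂⟩
  · exact ⟨h₁, h₂⟩
  · exact ⟨h₁, h₂⟩
  · trivial
  · trivial

lemma BEdge.isBVertex_right (h : BEdge n u v) : IsBVertex n v := by
  rcases h with ⟨i, h₁, h₂, -, rfl⟩ | ⟨i, h₁, h₂, -, rfl⟩ | ⟨i, -, h₂, -, rfl⟩ |
    ⟨-, -, -, -, rfl⟩ | ⟨i, -, h₂, -, rfl⟩ | ⟨i, -, h₂, -, rfl⟩ | ⟨-, rfl⟩ | ⟨-, rfl⟩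
  · exact ⟨h₁, h₂⟩
  · exact ⟨h₁, h₂⟩
  · exact isBVertex_aN h₂
  · trivial
  · exact isBVertex_bN h₂
  · exact isBVertex_aN h₂
  · trivial
  · trivial

lemma bVal_s (n : ℕ) (π : BV → BV) : BVal n π .s = 0 := by
  classical
  have h : ∃ k, π^[k] BV.s = .s := ⟨0, rfl⟩
  rw [BVal, dif_pos h, (Nat.find_eq_zero h).2 rfl, Finset.sum_range_zero]

lemma bVal_eq_of_ne_s (hu : u ≠ .s) (h : ∃ k, π^[k] (π u) = .s) :
    BVal n π u = rB n u (π u) + BVal n π (π u) := by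
  classical
  have h' : ∃ k, π^[k] u = .s := h.imp' Nat.succ fun _ => id
  rw [BVal, dif_pos h', BVal, dif_pos h, Nat.find_comp_succ h' h hu, Finset.sum_range_succ',
    add_comm]
  rfl

variable (hP : IsBPolicy n π) (hW : BWeakUnichain n π)
include hP

lemma IsBPolicy.update (he : BEdge n u v) : IsBPolicy n (Function.update π u v) := by
  intro w hw
  obtain rfl | hwu := eq_or_ne w u
  · rwa [Function.update_self]
  · rw [Function.update_of_ne hwu]
    exact hP w hw

include hW

lemma bVal_eq (hu : IsBVertex n u) : BVal n π u = rB n u (π u) + BVal n π (π u) := by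
  obtain rfl | hs := eq_or_ne u .s
  · have loop : π .s = .s := by simpa [BEdge] using hP .s trivial
    simp [loop, rB]
  · exact bVal_eq_of_ne_s hs (hW _ (hP u hu).isBVertex_right)

lemma bVal_d : BVal n π .d = 0 := by
  have hd : π .d = .s := by simpa [BEdge] using hP .d trivial
  rw [bVal_eq hP hW (u := .d) trivial, hd, bVal_s]
  simp [rB]

end Values

/-- A potential on the vertices bounding the rewards: no reward of an edge exceeds the increase
of the potential, so that all cycles have nonpositive total reward. -/
def potential (n : ℕ) : BV → ℚ
  | .t => 2
  | .s => 2 ^ (n + 2)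
  | .d => 2 ^ (n + 2)
  | .a i => 2 ^ i
  | .b i => 2 ^ (i + 1)

section Potential

variable {n : ℕ} {π : BV → BV} {u v : BV}

lemma two_pow_succ_le_potential_aN (n i : ℕ) : 2 ^ (i + 1) ≤ potential n (aN n (i + 1)) := by
  unfold aN
  split_ifs
  · exact pow_le_pow_right₀ one_le_two (by lia)
  · exact le_rfl

lemma two_pow_add_two_le_potential_bN (n i : ℕ) :
    2 ^ (i + 2) ≤ potential n (bN n (i + 1)) := by
  unfold bN
  split_ifs
  · exact pow_le_pow_right₀ one_le_two (by lia)
  · exact le_rfl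

lemma rB_a_aN (n i : ℕ) : rB n (.a i) (aN n (i + 1)) = 0 := by
  unfold aN; split_ifs <;> rfl

lemma rB_b_aN (n i : ℕ) : rB n (.b i) (aN n (i + 1)) = 0 := by
  unfold aN; split_ifs <;> rfl

lemma rB_b_bN (n i : ℕ) : rB n (.b i) (bN n (i + 1)) = 3 / 4 := by
  unfold bN; split_ifs with hi
  · simp [rB, Nat.succ_injective hi]
  · simp [rB]

lemma BEdge.rB_le_potential_sub (h : BEdge n u v) :
    rB n u v ≤ potential n v - potential n u := by
  rcases h with ⟨i, h₁, -, rfl, rfl⟩ | ⟨i, -, -, rfl, rfl⟩ | ⟨i, h₁, -, rfl, rfl⟩ |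
    ⟨i, -, -, rfl, rfl⟩ | ⟨i, -, -, rfl, rfl⟩ | ⟨i, -, -, rfl, rfl⟩ | ⟨rfl, rfl⟩ |
    ⟨rfl, rfl⟩
  · simpa [rB, potential] using two_le_two_pow_of_one_le h₁
  · simp only [rB, potential, if_true]
    linarith [pow_succ (2 : ℚ) i]
  · rw [rB_a_aN, potential]
    linarith [two_pow_succ_le_potential_aN n i, pow_succ (2 : ℚ) i, two_le_two_pow_of_one_le h₁]
  · simp only [rB, potential]
    linarith
  · rw [rB_b_bN, potential]
    linarith [two_pow_add_two_le_potential_bN n i, pow_succ (2 : ℚ) (i + 1),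
      two_le_two_pow_of_one_le (i := i + 1) (by lia)]
  · rw [rB_b_aN, potential]
    linarith [two_pow_succ_le_potential_aN n i]
  · simp [rB, potential]
  · simp [rB, potential]

variable (hP : IsBPolicy n π) (hW : BWeakUnichain n π)
include hP hW

lemma bVal_sub_iterate_le (k : ℕ) (hv : IsBVertex n v) :
    BVal n π v - BVal n π (π^[k] v) ≤ potential n (π^[k] v) - potential n v := by
  induction k generalizing v with
  | zero => simp
  | succ k ih =>
    rw [Function.iterate_succ_apply]
    linarith [ih (hP v hv).isBVertex_right, bVal_eq hP hW hv, (hP v hv).rB_le_potential_sub]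

lemma BImproving.iterate_ne (h : BImproving n π u v) (k : ℕ) : π^[k] v ≠ u := by
  obtain ⟨he, hz⟩ := h
  rintro rfl
  have path := bVal_sub_iterate_le hP hW k he.isBVertex_right
  have edge := he.rB_le_potential_sub
  rw [zB] at hz
  linarith

lemma BWeakUnichain.update (h : BImproving n π u v) :
    BWeakUnichain n (Function.update π u v) := fun w hw =>
  exists_iterate_update_eq (h.iterate_ne hP hW) (hW v h.1.isBVertex_right) (hW w hw)

end Potential

lemma isBPolicy_pi0 {n : ℕ} (hn : 1 ≤ n) : IsBPolicy n (pi0 n) := by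
  rintro (_ | _ | _ | i | i) hu
  · exact .inl ⟨1, le_rfl, hn, rfl, rfl⟩
  all_goals simp_all [BEdge, IsBVertex, pi0]

lemma bWeakUnichain_pi0 {n : ℕ} (hn : 1 ≤ n) : BWeakUnichain n (pi0 n) := by
  let distance : BV → ℕ
    | .t => n + 2
    | .s => 0
    | .d => 1
    | .a i => n + 1 - i
    | .b i => n + 1 - i
  refine fun u hu => exists_iterate_eq_of_measure_lt distance (fun v hv => ?_) hu
  have aN_lt (i : ℕ) (hi : i ≤ n) : distance (aN n (i + 1)) < n + 1 - i := by
    unfold aN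
    split_ifs <;> simp only [distance] <;> lia
  refine or_iff_not_imp_left.2 fun hs => ⟨(isBPolicy_pi0 hn v hv).isBVertex_right, ?_⟩
  rcases v with _ | _ | _ | i | i
  · simp only [pi0, distance]; lia
  · exact absurd rfl hs
  · simp only [pi0, distance]; lia
  · exact aN_lt i hv.2
  · exact aN_lt i hv.2

/-! ### Switches as edges of `𝔅_n` -/

namespace Switch

/-- The switch is an edge of `𝔅_n`. -/
def IsValid (n : ℕ) (s : Switch) : Prop := 1 ≤ s.level ∧ s.level ≤ n

/-- The vertex that the edge leaves. -/
def tail : Switch → BV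
  | travel _ => .t
  | atA _ i => .a i
  | atB _ i => .b i

/-- The vertex that the edge enters. -/
def head (n : ℕ) : Switch → BV
  | travel j => .a j
  | atA .enter i => .b i
  | atA .skip i => aN n (i + 1)
  | atA .board _ => .t
  | atB .stay i => bN n (i + 1)
  | atB .leave i => aN n (i + 1)

variable {n : ℕ} {s s' : Switch}

lemma IsValid.bEdge (hs : s.IsValid n) : BEdge n s.tail (s.head n) := by
  obtain ⟨h₁, h₂⟩ := hs
  rcases s with j | ⟨_ | _ | _, i⟩ | ⟨_ | _, i⟩ <;> simp_all [BEdge, tail, head, level]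

lemma exists_isValid_of_bEdge {u v : BV} (h : BEdge n u v) (hv : u ≠ .d ∧ u ≠ .s) :
    ∃ s : Switch, s.IsValid n ∧ s.tail = u ∧ s.head n = v := by
  rcases h with ⟨i, h₁, h₂, rfl, rfl⟩ | ⟨i, h₁, h₂, rfl, rfl⟩ | ⟨i, h₁, h₂, rfl, rfl⟩ |
    ⟨i, h₁, h₂, rfl, rfl⟩ | ⟨i, h₁, h₂, rfl, rfl⟩ | ⟨i, h₁, h₂, rfl, rfl⟩ | ⟨rfl, -⟩ | ⟨rfl, -⟩
  · exact ⟨travel i, ⟨h₁, h₂⟩, rfl, rfl⟩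
  · exact ⟨atA .enter i, ⟨h₁, h₂⟩, rfl, rfl⟩
  · exact ⟨atA .skip i, ⟨h₁, h₂⟩, rfl, rfl⟩
  · exact ⟨atA .board i, ⟨h₁, h₂⟩, rfl, rfl⟩
  · exact ⟨atB .stay i, ⟨h₁, h₂⟩, rfl, rfl⟩
  · exact ⟨atB .leave i, ⟨h₁, h₂⟩, rfl, rfl⟩
  · exact absurd rfl hv.1
  · exact absurd rfl hv.2

lemma nB_eq (n : ℕ) (s : Switch) :
    NB n s.tail (s.head n) =
      match s with
      | travel j => j
      | atA x i => n + 1 + 5 * (i - 1) + (atA x i).slot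
      | atB y i => n + 1 + 5 * (i - 1) + (atB y i).slot := by
  rcases s with j | ⟨_ | _ | _, i⟩ | ⟨_ | _, i⟩ <;>
    simp only [tail, head, slot, aN, bN] <;> (try split_ifs) <;> simp only [NB] <;> lia

lemma Precedes.nB_lt (h : s.Precedes s') (hs : s.IsValid n) (hs' : s'.IsValid n) :
    NB n s.tail (s.head n) < NB n s'.tail (s'.head n) := by
  rw [nB_eq, nB_eq]
  obtain ⟨h₁, h₂⟩ := hs
  obtain ⟨h₁', h₂'⟩ := hs'
  rcases s with j | ⟨_ | _ | _, i⟩ | ⟨_ | _, i⟩ <;>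
  rcases s' with j' | ⟨_ | _ | _, i'⟩ | ⟨_ | _, i'⟩ <;>
    simp only [Precedes, block, slot, level] at * <;> lia

lemma eq_or_precedes_or_precedes (hs : 1 ≤ s.level) (hs' : 1 ≤ s'.level) :
    s = s' ∨ s.Precedes s' ∨ s'.Precedes s := by
  rcases s with j | ⟨_ | _ | _, i⟩ | ⟨_ | _, i⟩ <;>
  rcases s' with j' | ⟨_ | _ | _, i'⟩ | ⟨_ | _, i'⟩ <;>
    simp only [Precedes, block, slot, level, travel.injEq, atA.injEq, atB.injEq, true_and,
      reduceCtorEq, false_and, false_or] at * <;> lia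

end Switch

/-! ### Level values of a policy for `𝔅_n` -/

/-- The values of a policy for `𝔅_n`, continued by `0` above level `n`. -/
noncomputable def LevelValues.ofPolicy (n : ℕ) (π : BV → BV) : LevelValues where
  t := BVal n π .t
  a i := if i ≤ n then BVal n π (.a i) else 0
  b i := if i ≤ n then BVal n π (.b i) else 0

namespace LevelValues

variable {n i : ℕ} {π : BV → BV} {s : Switch}

lemma ofPolicy_a (hi : i ≤ n) : (ofPolicy n π).a i = BVal n π (.a i) := if_pos hi

lemma ofPolicy_b (hi : i ≤ n) : (ofPolicy n π).b i = BVal n π (.b i) := if_pos hi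

lemma ofPolicy_a_succ (hi : i ≤ n) : (ofPolicy n π).a (i + 1) = BVal n π (aN n (i + 1)) := by
  obtain rfl | hlt := hi.eq_or_lt
  · simp [ofPolicy, aN, bVal_s]
  · simp [ofPolicy_a hlt, aN, hlt.ne]

variable (hP : IsBPolicy n π) (hW : BWeakUnichain n π)
include hP hW

lemma ofPolicy_b_succ (hi : i ≤ n) : (ofPolicy n π).b (i + 1) = BVal n π (bN n (i + 1)) := by
  obtain rfl | hlt := hi.eq_or_lt
  · simp [ofPolicy, bN, bVal_d hP hW]
  · simp [ofPolicy_b hlt, bN, hlt.ne]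

lemma gain_ofPolicy (hs : s.IsValid n) :
    (ofPolicy n π).gain s = zB n π s.tail (s.head n) := by
  have hle := hs.2
  rcases s with j | ⟨_ | _ | _, i⟩ | ⟨_ | _, i⟩ <;>
    simp only [Switch.level] at hle <;>
    simp only [gain, zB, Switch.tail, Switch.head, ofPolicy_a hle, ofPolicy_b hle,
      ofPolicy_a_succ hle, ofPolicy_b_succ hP hW hle, rB_a_aN, rB_b_aN, rB_b_bN, zero_add] <;>
    simp [rB, ofPolicy]

end LevelValues

lemma BImproving.exists_isValid {n : ℕ} {π : BV → BV} {u v : BV} (hP : IsBPolicy n π)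
    (hW : BWeakUnichain n π) (h : BImproving n π u v) :
    ∃ s : Switch, s.IsValid n ∧ s.tail = u ∧ s.head n = v := by
  obtain ⟨he, hz⟩ := h
  refine Switch.exists_isValid_of_bEdge he ⟨?_, ?_⟩ <;> rintro rfl <;>
    obtain rfl : v = .s := by simpa [BEdge] using he
  all_goals simp [zB, rB, bVal_s, bVal_d hP hW] at hz

namespace LevelPolicy

variable {n : ℕ} {S : LevelPolicy} {π : BV → BV} {s s' : Switch}

/-- `S` describes the policy `π` for `𝔅_n`; above level `n`, it skips and leaves. -/
structure Represents (n : ℕ) (S : LevelPolicy) (π : BV → BV) : Prop where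
  target_isValid : (Switch.travel S.target).IsValid n
  map_tail : ∀ s : Switch, s.IsValid n → S.Active s → π s.tail = s.head n
  a_of_lt : ∀ i, n < i → S.a i = .skip
  b_of_lt : ∀ i, n < i → S.b i = .leave

lemma Active.eq_or_of_apply (h : (S.apply s).Active s') :
    s' = s ∨ s'.tail ≠ s.tail ∧ S.Active s' := by
  cases s <;> cases s' <;> simp only [Active, apply, Function.update_apply, Switch.tail] at * <;>
    grind

lemma Represents.apply (h : S.Represents n π) (hs : s.IsValid n) :
    (S.apply s).Represents n (Function.update π s.tail (s.head n)) where
  target_isValid := by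
    cases s with
    | travel j => exact hs
    | atA x i => exact h.target_isValid
    | atB y i => exact h.target_isValid
  map_tail := by
    intro s' hs' hactive
    obtain rfl | ⟨htail, hactive⟩ := hactive.eq_or_of_apply
    · exact Function.update_self ..
    · rw [Function.update_of_ne htail, h.map_tail s' hs' hactive]
  a_of_lt := by
    intro i hi
    have hne : i ≠ s.level := (hs.2.trans_lt hi).ne'
    cases s with
    | atA x l => exact (Function.update_of_ne hne ..).trans (h.a_of_lt i hi)
    | _ => exact h.a_of_lt i hi
  b_of_lt := by
    intro i hi
    have hne : i ≠ s.level := (hs.2.trans_lt hi).ne'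
    cases s with
    | atB y l => exact (Function.update_of_ne hne ..).trans (h.b_of_lt i hi)
    | _ => exact h.b_of_lt i hi

lemma Represents.isValueOf (h : S.Represents n π) (hP : IsBPolicy n π) (hW : BWeakUnichain n π) :
    (LevelValues.ofPolicy n π).IsValueOf S := by
  intro s hs hactive
  obtain hle | hlt := le_or_gt s.level n
  · have hvalid : s.IsValid n := ⟨hs, hle⟩
    rw [LevelValues.gain_ofPolicy hP hW hvalid, zB, ← h.map_tail s hvalid hactive,
      bVal_eq hP hW hvalid.bEdge.isBVertex_left, sub_self]
  · have above (i : ℕ) (hi : n < i) :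
        (LevelValues.ofPolicy n π).a i = 0 ∧ (LevelValues.ofPolicy n π).b i = 0 := by
      simp [LevelValues.ofPolicy, hi.not_ge]
    cases s with
    | travel j => exact absurd (hactive ▸ h.target_isValid.2) hlt.not_ge
    | atA x i =>
      obtain rfl : .skip = x := (h.a_of_lt i hlt).symm.trans hactive
      simp [LevelValues.gain, above i hlt, above (i + 1) (Nat.lt_succ_of_lt hlt)]
    | atB y i =>
      obtain rfl : .leave = y := (h.b_of_lt i hlt).symm.trans hactive
      simp [LevelValues.gain, above i hlt, above (i + 1) (Nat.lt_succ_of_lt hlt)]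

end LevelPolicy

/-! ### The run of Bland's rule -/

lemma LevelValues.IsFirst.eq_of_minimal {n : ℕ} {π : BV → BV} {s₀ s : Switch}
    (hP : IsBPolicy n π) (hW : BWeakUnichain n π) (h : (LevelValues.ofPolicy n π).IsFirst s₀)
    (htravel : ∀ j, s₀ = .travel j → j ≤ n) (hs : s.IsValid n)
    (himp : BImproving n π s.tail (s.head n))
    (hmin : ∀ u v, BImproving n π u v → NB n s.tail (s.head n) ≤ NB n u v) : s₀ = s := by
  have not_precedes : ¬ s.Precedes s₀ := fun hprec =>
    (h.gain_nonpos s hs.1 hprec).not_gt (LevelValues.gain_ofPolicy hP hW hs ▸ himp.2)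
  have hs₀ : s₀.IsValid n := by
    refine ⟨h.one_le_level, ?_⟩
    contrapose! not_precedes
    have := hs.2
    cases s₀ with
    | travel j => exact absurd (htravel j rfl) not_precedes.not_ge
    | _ => cases s <;> simp only [Switch.Precedes, Switch.block, Switch.level] at * <;> lia
  obtain heq | hprec | hprec := Switch.eq_or_precedes_or_precedes hs₀.1 hs.1
  · exact heq
  · have himp₀ : BImproving n π s₀.tail (s₀.head n) :=
      ⟨hs₀.bEdge, LevelValues.gain_ofPolicy hP hW hs₀ ▸ h.gain_pos⟩
    exact absurd (hmin _ _ himp₀) (hprec.nB_lt hs₀ hs).not_ge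
  · exact absurd hprec not_precedes

/-- The invariant of the run of Bland's rule on `𝔅_n`. -/
structure IsPhasePolicy (n : ℕ) (π : BV → BV) : Prop where
  isBPolicy : IsBPolicy n π
  bWeakUnichain : BWeakUnichain n π
  exists_inPhase : ∃ S : LevelPolicy, S.Represents n π ∧ S.InPhase

lemma isPhasePolicy_pi0 {n : ℕ} (hn : 1 ≤ n) : IsPhasePolicy n (pi0 n) := by
  let S₀ : LevelPolicy := ⟨1, fun _ => .skip, fun _ => .leave⟩
  refine ⟨isBPolicy_pi0 hn, bWeakUnichain_pi0 hn, S₀, ⟨⟨le_rfl, hn⟩, ?_, ?_, ?_⟩, .restoring 1 0 ?_⟩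
  · rintro (j | ⟨_, i⟩ | ⟨_, i⟩) - ⟨⟩ <;> rfl
  · exact fun _ _ => rfl
  · exact fun _ _ => rfl
  · exact ⟨.inl rfl, le_rfl, by lia, by lia, rfl, by lia, fun i _ => by constructor <;> simp [S₀]⟩

namespace IsPhasePolicy

variable {n : ℕ} {π π' : BV → BV} {s : Switch}

lemma exists_transition (h : IsPhasePolicy n π) (hs : s.IsValid n)
    (himp : BImproving n π s.tail (s.head n))
    (hmin : ∀ u v, BImproving n π u v → NB n s.tail (s.head n) ≤ NB n u v) :
    ∃ S : LevelPolicy, S.Represents n π ∧ S.Transition (.ofPolicy n π) s := by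
  obtain ⟨hP, hW, S, hS, hphase⟩ := h
  have skip_succ : S.a (n + 1) = .skip := hS.a_of_lt (n + 1) n.lt_succ_self
  obtain ⟨s₀, hs₀⟩ :=
    hphase.exists_transition (hS.isValueOf hP hW) ⟨n + 1, by lia, by simp [skip_succ]⟩
  have htravel (j : ℕ) (hj : s₀ = .travel j) : j ≤ n := by
    by_contra! hlt
    simpa [hS.a_of_lt j hlt] using hs₀.enter_of_travel j hj
  obtain rfl := hs₀.isFirst.eq_of_minimal hP hW htravel hs himp hmin
  exact ⟨S, hS, hs₀⟩

lemma of_isBlandStep (h : IsPhasePolicy n π) (hstep : IsBlandStep n (NB n) π π') :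
    IsPhasePolicy n π' := by
  obtain ⟨u, v, himp, hmin, rfl⟩ := hstep
  obtain ⟨s, hs, rfl, rfl⟩ := himp.exists_isValid h.isBPolicy h.bWeakUnichain
  obtain ⟨S, hS, htrans⟩ := h.exists_transition hs himp hmin
  exact ⟨h.isBPolicy.update himp.1, h.bWeakUnichain.update h.isBPolicy himp,
    S.apply s, hS.apply hs, htrans.inPhase⟩

lemma of_blandReaches (hn : 1 ≤ n) (h : BlandReaches n (NB n) (pi0 n) π) :
    IsPhasePolicy n π := by
  induction h with
  | refl => exact isPhasePolicy_pi0 hn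
  | tail _ hstep ih => exact ih.of_isBlandStep hstep

end IsPhasePolicy

/-- Along the run of Bland's policy iteration on `𝔅_n` started at `π_0`: whenever the
algorithm applies `skip i` (i.e. `skip i` is improving with the smallest Bland number),
its reduced costs exceed those of `board i`; whenever it applies `enter i`, its reduced
costs exceed those of both `skip i` and `board i`. -/
theorem stmt7 (n : ℕ) (hn : 1 ≤ n) (i : ℕ) (hi1 : 1 ≤ i) (hin : i ≤ n)
    (π : BV → BV) (hvis : BlandReaches n (NB n) (pi0 n) π) :
    (BImproving n π (BV.a i) (aN n (i + 1)) →
      (∀ u v, BImproving n π u v → NB n (BV.a i) (aN n (i + 1)) ≤ NB n u v) →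
      zB n π (BV.a i) BV.t < zB n π (BV.a i) (aN n (i + 1))) ∧
    (BImproving n π (BV.a i) (BV.b i) →
      (∀ u v, BImproving n π u v → NB n (BV.a i) (BV.b i) ≤ NB n u v) →
      zB n π (BV.a i) (aN n (i + 1)) < zB n π (BV.a i) (BV.b i) ∧
      zB n π (BV.a i) BV.t < zB n π (BV.a i) (BV.b i)) := by
  have hπ := IsPhasePolicy.of_blandReaches hn hvis
  have gain_eq (x : AMove) := LevelValues.gain_ofPolicy hπ.isBPolicy hπ.bWeakUnichain
    (s := .atA x i) ⟨hi1, hin⟩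
  constructor
  · intro himp hmin
    obtain ⟨S, -, h⟩ := hπ.exists_transition (s := .atA .skip i) ⟨hi1, hin⟩ himp hmin
    simpa only [LevelValues.Beats, gain_eq, Switch.tail, Switch.head] using h.beats
  · intro himp hmin
    obtain ⟨S, -, h⟩ := hπ.exists_transition (s := .atA .enter i) ⟨hi1, hin⟩ himp hmin
    simpa only [LevelValues.Beats, gain_eq, Switch.tail, Switch.head] using h.beats
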